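/- Let H be a non-semisimple Hopf algebra over k of dimension pq, where p ≤ q are odd primes, with antipode S. Then the order of S⁴ (the smallest positive integer m with S^{4m} = id_H) equals p. -/

import Mathlib

open scoped TensorProduct

/-- A group-like element of a coalgebra: a nonzero element `a` with `Δ a = a ⊗ a`. -/
def IsGroupLike (k : Type*) {H : Type*} [CommSemiring k] [AddCommMonoid H] [Module k H]
    [Coalgebra k H] (a : H) : Prop :=
  a ≠ 0 ∧ Coalgebra.comul (R := k) a = a ⊗ₜ[k] a

/-- The convolution product on the dual of a coalgebra. -/
noncomputable def conv {k H : Type*} [CommSemiring k] [AddCommMonoid H] [Module k H]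
    [Coalgebra k H] (f g : Module.Dual k H) : Module.Dual k H :=
  LinearMap.mul' k k ∘ₗ TensorProduct.map f g ∘ₗ Coalgebra.comul

/-- `l ∈ H*` is a right integral of `H*`: `l * β = β(1) • l` for the convolution product. -/
def IsRightIntegralDual (k : Type*) {H : Type*} [CommSemiring k] [Semiring H]
    [HopfAlgebra k H] (l : Module.Dual k H) : Prop :=
  ∀ f : Module.Dual k H, conv l f = f 1 • l

/-- `Λ ∈ H` is a left integral of `H`: `a * Λ = ε(a) • Λ` for all `a`. -/
def IsLeftIntegral (k : Type*) {H : Type*} [CommSemiring k] [Semiring H]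
    [HopfAlgebra k H] (L : H) : Prop :=
  ∀ a : H, a * L = Coalgebra.counit (R := k) a • L

/-- `Λ ∈ H` is a right integral of `H`: `Λ * a = ε(a) • Λ` for all `a`. -/
def IsRightIntegral (k : Type*) {H : Type*} [CommSemiring k] [Semiring H]
    [HopfAlgebra k H] (L : H) : Prop :=
  ∀ a : H, L * a = Coalgebra.counit (R := k) a • L

/-- `g` is the distinguished group-like element of `H`: it is group-like and
`β * λ = β(g) • λ` for some nonzero right integral `λ` of `H*`. -/
def IsDistinguishedGroupLike (k : Type*) {H : Type*} [CommSemiring k] [Semiring H]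
    [HopfAlgebra k H] (g : H) : Prop :=
  IsGroupLike k g ∧ ∃ l : Module.Dual k H, l ≠ 0 ∧ IsRightIntegralDual k l ∧
    ∀ f : Module.Dual k H, conv f l = f g • l

/-- `α` is the distinguished group-like element of `H*`: an algebra map `H → k` with
`Λ * a = α(a) • Λ` for some nonzero left integral `Λ` of `H`. -/
def IsDistinguishedGroupLikeDual (k : Type*) {H : Type*} [CommSemiring k] [Semiring H]
    [HopfAlgebra k H] (α : H →ₐ[k] k) : Prop :=
  ∃ L : H, L ≠ 0 ∧ IsLeftIntegral k L ∧ ∀ a : H, L * a = α a • L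

/-- `IsHopfIndex k g n` : `n` is the index of the Hopf algebra `H` with distinguished
group-like element `g`, i.e. the smallest positive integer `n` with `S ^ (4 n) = id` and
`g ^ n = 1`, where `S` is the antipode. -/
def IsHopfIndex (k : Type*) {H : Type*} [CommSemiring k] [Semiring H] [HopfAlgebra k H]
    (g : H) (n : ℕ) : Prop :=
  0 < n ∧ (HopfAlgebra.antipode (R := k) (A := H) : Module.End k H) ^ (4 * n) = 1 ∧ g ^ n = 1 ∧
    ∀ m : ℕ, 0 < m → (HopfAlgebra.antipode (R := k) (A := H) : Module.End k H) ^ (4 * m) = 1 →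
      g ^ m = 1 → n ≤ m

/-- The simultaneous eigenspace `H^ω_{a,i,j} = {u ∈ H | S² u = (-1)^a ω^i • u, u * g = ω^j • u}`
for `(a,i,j) ∈ ℤ/2 × ℤ/n × ℤ/n`. -/
noncomputable def hopfEigenspace {k H : Type*} [CommRing k] [Ring H] [HopfAlgebra k H]
    (g : H) (ω : k) {n : ℕ} (t : ZMod 2 × ZMod n × ZMod n) : Submodule k H :=
  Module.End.eigenspace ((HopfAlgebra.antipode (R := k) (A := H) : Module.End k H) ^ 2)
      ((-1 : k) ^ t.1.val * ω ^ t.2.1.val) ⊓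
    Module.End.eigenspace (LinearMap.mulRight k g : Module.End k H) (ω ^ t.2.2.val)

/-- Convolution powers of an element of the dual; the zeroth power is the counit,
the unit of the convolution algebra. -/
noncomputable def convPow {k H : Type*} [CommSemiring k] [AddCommMonoid H] [Module k H]
    [Coalgebra k H] (f : Module.Dual k H) : ℕ → Module.Dual k H
  | 0 => Coalgebra.counit
  | m + 1 => conv f (convPow f m)

/-!
Let `g` be the modular element and `α` the modular function of `H`. Radford's formula writes `S⁴` as
the coadjoint action of `α` followed by the adjoint action of `g`, so that `S⁴ⁿ = 1` as soon as
`gⁿ = 1` and `αⁿ = 1`, and the point is to bound the orders of `g` and `α`.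

Take a left integral `Λ` of `H` and a dual integral `μ` with `μ(Λ) = 1`. The formula
`tr(S ∘ T) = ∑ μ(T(Λ₁) Λ₂)` gives the trace of `S²` composed with a right multiplication or with the
hit action of a character `χ` as a multiple of `ε(Λ)` or of `χ(Λ)`. Both are zero when `H` is not
semisimple: `ε(Λ) = 0` by Maschke's theorem, and `χ(Λ)² = ε(Λ) χ(Λ)`.

Let `T` be the right multiplication by `g` or the hit action of `α`, of order `n`. The Galois map
of `H` conjugates `T ⊗ T` and `T ⊗ 1`, hence `tr(Tⁱ) ∈ {0, dim H}` and the fixed space of `T` has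
dimension `dim H / n`. The restriction of `S²` to it has trace zero, so its dimension is not `1`;
and it is at least `q` if `S⁴` has order dividing `q`, because an odd number of `2q`-th roots of
unity with sum zero has at least `q` terms: reduce the relation modulo `1 - ζ`. Finally the orders
of `g` and `α` are not coprime with product `dim H`, since then the fixed space of `α` would be
spanned by the powers of `g`, where `S² = 1`. For `dim H = pq` this leaves only orders dividing
`p`. The same statement on roots of unity, for a prime larger than `dim H`, excludes `S⁴ = 1`.
-/

lemma dvd_of_mul_eq_prime_mul_prime {p q m n m' n' : ℕ} (hp : p.Prime) (hq : q.Prime)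
    (hpq : p ≤ q) (h : m * n = p * q) (h' : m' * n' = p * q) (hm : m ≠ 1) (hm' : m' ≠ 1)
    (hle : n ∣ q → n' ∣ q → q ≤ m) (hcop : n.Coprime n' → n * n' ≠ p * q) : n ∣ p := by
  have hcases {m n : ℕ} (h : m * n = p * q) (hm : m ≠ 1) : n ∣ p ∨ (n = q ∧ m = p) := by
    obtain ⟨y, z, hy, hz, rfl⟩ := Nat.dvd_mul.1 (Dvd.intro_left _ h)
    rcases (Nat.dvd_prime hq).1 hz with rfl | rfl
    · exact .inl (by rwa [mul_one])
    · have hmy : m * y = p := Nat.eq_of_mul_eq_mul_right hq.pos (by rw [mul_assoc, h])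
      have hm_eq : m = p := ((Nat.dvd_prime hp).1 ⟨y, hmy.symm⟩).resolve_left hm
      obtain rfl : y = 1 := Nat.eq_of_mul_eq_mul_left hp.pos (by rw [← hm_eq, hmy, hm_eq, mul_one])
      exact .inr ⟨one_mul _, hm_eq⟩
  by_contra hn
  obtain ⟨rfl, rfl⟩ := (hcases h hm).resolve_left hn
  have hne : m ≠ n := fun hmn ↦ hn (hmn ▸ dvd_rfl)
  have hn' : ¬ n' ∣ n := fun hn' ↦ hne (hpq.antisymm (hle dvd_rfl hn'))
  have hdvd : n' ∣ m := (hcases h' hm').resolve_right fun h ↦ hn' h.1.dvd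
  obtain rfl : n' = m := ((Nat.dvd_prime hp).1 hdvd).resolve_left fun h1 ↦ hn' (h1 ▸ one_dvd n)
  exact hcop ((Nat.coprime_primes hq hp).2 hne.symm) (mul_comm _ _)

section RootsOfUnity

open Polynomial
open scoped ComplexOrder

lemma cyclotomic_dvd_of_aeval_eq_zero {K : Type*} [Field K] [CharZero K] {n : ℕ} (hn : 0 < n)
    {ζ : K} (hζ : IsPrimitiveRoot ζ n) {P : ℤ[X]} (hP : aeval ζ P = 0) : cyclotomic n ℤ ∣ P := by
  rw [cyclotomic_eq_minpoly hζ hn]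
  exact minpoly.isIntegrallyClosed_dvd (hζ.isIntegral hn) hP

lemma eq_one_of_sum_eq_card_of_norm_eq_one {s : Multiset ℂ} (hs : ∀ a ∈ s, ‖a‖ = 1)
    (hsum : s.sum = s.card) : ∀ a ∈ s, a = 1 := by
  have hle : ∀ a ∈ s, a.re ≤ 1 := fun a ha ↦ hs a ha ▸ Complex.re_le_norm a
  have hre : (s.map Complex.re).sum = (s.map fun _ ↦ (1 : ℝ)).sum := by
    simpa [hsum] using (map_multiset_sum Complex.reAddGroupHom s).symm
  have hre_eq : ∀ a ∈ s, a.re = 1 := by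
    by_contra! hne
    obtain ⟨a, ha, hne⟩ := hne
    exact (Multiset.sum_lt_sum hle ⟨a, ha, lt_of_le_of_ne (hle a ha) hne⟩).ne hre
  intro a ha
  have hnonneg : 0 ≤ a := Complex.re_eq_norm.1 ((hre_eq a ha).trans (hs a ha).symm)
  rw [Complex.eq_re_of_ofReal_le hnonneg, hre_eq a ha, Complex.ofReal_one]

variable {K : Type*} [Field K]

lemma exists_aeval_eq_and_eval_one {r : ℕ} (hr : Odd r) {ζ : K} (hζ : IsPrimitiveRoot ζ r)
    {a : K} (ha : a ^ (2 * r) = 1) :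
    ∃ P : ℤ[X], aeval ζ P = a ∧ (P.eval 1 = 1 ∨ P.eval 1 = -1) := by
  have : NeZero r := ⟨hr.pos.ne'⟩
  rw [mul_comm, pow_mul, sq_eq_one_iff] at ha
  rcases ha with ha | ha
  · obtain ⟨i, -, rfl⟩ := hζ.eq_pow_of_pow_eq_one ha
    exact ⟨X ^ i, by simp⟩
  · obtain ⟨i, -, hi⟩ := hζ.eq_pow_of_pow_eq_one (ξ := -a) (by rw [hr.neg_pow, ha, neg_neg])
    exact ⟨-X ^ i, by simp [hi]⟩

variable {s : Multiset K}

lemma exists_aeval_eq_sum {r : ℕ} (hr : Odd r) {ζ : K} (hζ : IsPrimitiveRoot ζ r)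
    (hs : ∀ a ∈ s, a ^ (2 * r) = 1) :
    ∃ P : ℤ[X], aeval ζ P = s.sum ∧ |P.eval 1| ≤ s.card ∧ (Odd (P.eval 1) ↔ Odd s.card) := by
  induction s using Multiset.induction with
  | empty => exact ⟨0, by simp⟩
  | cons a s ih =>
    obtain ⟨P, hP, hle, hodd⟩ := ih fun b hb ↦ hs b (Multiset.mem_cons_of_mem hb)
    obtain ⟨Q, rfl, hQ⟩ := exists_aeval_eq_and_eval_one hr hζ (hs a (Multiset.mem_cons_self a s))
    refine ⟨Q + P, by simp [hP], ?_, ?_⟩ <;> rw [eval_add, Multiset.card_cons]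
    · push_cast
      rcases hQ with hQ | hQ <;> rw [hQ] <;> grind
    · rcases hQ with hQ | hQ <;> rw [hQ] <;> grind

variable [CharZero K]

lemma eq_one_of_sum_eq_card {n : ℕ} (hn : 0 < n) {ζ : K} (hζ : IsPrimitiveRoot ζ n)
    (hs : ∀ a ∈ s, a ^ n = 1) (hsum : s.sum = s.card) : ∀ a ∈ s, a = 1 := by
  have : NeZero n := ⟨hn.ne'⟩
  choose! e _ he using fun a ha ↦ hζ.eq_pow_of_pow_eq_one (hs a ha)
  let P : ℤ[X] := (s.map fun a ↦ X ^ e a).sum - (s.card : ℤ[X])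
  have haeval : aeval ζ P = 0 := by
    simp [P, map_multiset_sum, Multiset.map_congr rfl he, hsum]
  let ξ := Complex.exp (2 * Real.pi * Complex.I / n)
  have hξ : IsPrimitiveRoot ξ n := Complex.isPrimitiveRoot_exp n hn.ne'
  have haeval_ξ : aeval ξ P = 0 :=
    aeval_eq_zero_of_dvd_aeval_eq_zero (cyclotomic_dvd_of_aeval_eq_zero hn hζ haeval)
      (by simpa [aeval_def, eval₂_eq_eval_map] using hξ.isRoot_cyclotomic hn)
  have hone : ∀ z ∈ s.map fun a ↦ ξ ^ e a, z = 1 := by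
    refine eq_one_of_sum_eq_card_of_norm_eq_one ?_ ?_
    · simp [hξ.norm'_eq_one hn.ne']
    · simpa [P, map_multiset_sum, sub_eq_zero] using haeval_ξ
  intro a ha
  have hdvd : n ∣ e a := (hξ.pow_eq_one_iff_dvd _).1 (hone _ (Multiset.mem_map_of_mem _ ha))
  rw [← he a ha, (hζ.pow_eq_one_iff_dvd _).2 hdvd]

lemma prime_le_card_of_sum_eq_zero {r : ℕ} (hr : r.Prime) (hr_odd : Odd r) {ζ : K}
    (hζ : IsPrimitiveRoot ζ r) (hs : ∀ a ∈ s, a ^ (2 * r) = 1) (hsum : s.sum = 0)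
    (hcard : Odd s.card) : r ≤ s.card := by
  have : Fact r.Prime := ⟨hr⟩
  obtain ⟨P, hP, hle, hodd⟩ := exists_aeval_eq_sum hr_odd hζ hs
  have hdvd : (r : ℤ) ∣ P.eval 1 := by
    simpa using eval_dvd (x := 1) (cyclotomic_dvd_of_aeval_eq_zero hr.pos hζ (hP.trans hsum))
  have hne : P.eval 1 ≠ 0 := fun h ↦ by simp [h, hcard] at hodd
  exact_mod_cast (Int.le_of_dvd (abs_pos.2 hne) ((dvd_abs _ _).2 hdvd)).trans hle

end RootsOfUnity

section FiniteOrder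

open Polynomial

lemma restrict_pow_eq_one {R M : Type*} [Semiring R] [AddCommMonoid M] [Module R M]
    {W : Submodule R M} {D : Module.End R M} (hD : ∀ x ∈ W, D x ∈ W) {n : ℕ} (h : D ^ n = 1) :
    (D.restrict hD) ^ n = 1 := by
  ext x
  simp [Module.End.pow_restrict, h]

variable {k V : Type*} [Field k] [AddCommGroup V] [Module k V]

lemma eq_one_of_isNilpotent_sub_one [CharZero k] {T : Module.End k V} {n : ℕ} (hn : n ≠ 0)
    (hT : T ^ n = 1) (h : IsNilpotent (T - 1)) : T = 1 := by
  rw [← map_one (algebraMap k (Module.End k V))] at h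
  have hss : (T - algebraMap k _ 1).IsSemisimple := by
    rw [Module.End.isSemisimple_sub_algebraMap_iff]
    exact Module.End.isSemisimple_of_squarefree_aeval_eq_zero (p := X ^ n - C 1)
      (separable_X_pow_sub_C 1 (Nat.cast_ne_zero.2 hn) one_ne_zero).squarefree (by simp [hT])
  simpa [sub_eq_zero] using Module.End.eq_zero_of_isNilpotent_isSemisimple h hss

lemma isProj_average [CharZero k] {T : Module.End k V} (hT : IsOfFinOrder T) :
    LinearMap.IsProj (T.eigenspace 1)
      ((orderOf T : k)⁻¹ • ∑ i ∈ Finset.range (orderOf T), T ^ i) := by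
  set S := ∑ i ∈ Finset.range (orderOf T), T ^ i with hS
  have hTS : T * S = S := by
    have h := mul_geom_sum T (orderOf T)
    rwa [pow_orderOf_eq_one, sub_self, sub_mul, one_mul, sub_eq_zero] at h
  refine ⟨fun x ↦ ?_, fun x hx ↦ ?_⟩
  · rw [Module.End.mem_eigenspace_iff, one_smul, LinearMap.smul_apply, map_smul,
      ← Module.End.mul_apply, hTS]
  · have hpow (i : ℕ) : (T ^ i) x = x := by
      rw [Module.End.mem_eigenspace_iff, one_smul] at hx
      rw [Module.End.pow_apply, Function.iterate_fixed hx]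
    rw [LinearMap.smul_apply, hS, LinearMap.sum_apply]
    simp only [hpow, Finset.sum_const, Finset.card_range, ← Nat.cast_smul_eq_nsmul k]
    exact inv_smul_smul₀ (Nat.cast_ne_zero.2 hT.orderOf_pos.ne') x

variable [FiniteDimensional k V]

section Roots

variable (K : Type*) [Field K] [Algebra k K]

lemma pow_eq_one_of_mem_aroots_charpoly {T : Module.End k V} {n : ℕ} (hT : T ^ n = 1) {a : K}
    (ha : a ∈ T.charpoly.aroots K) : a ^ n = 1 := by
  let T' : Module.End K (TensorProduct k K V) := T.baseChange K
  have hpow : T' ^ n = 1 := by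
    rw [← LinearMap.baseChange_pow, hT, LinearMap.baseChange_one]
  have heig : T'.HasEigenvalue a := by
    rw [Module.End.hasEigenvalue_iff_isRoot_charpoly, LinearMap.charpoly_baseChange]
    exact isRoot_of_mem_roots ha
  obtain ⟨v, hv⟩ := heig.exists_hasEigenvector
  have hav : a ^ n • v = (1 : K) • v := by
    rw [← hv.pow_apply, hpow, Module.End.one_apply, one_smul]
  exact smul_left_injective K hv.2 hav

variable [IsAlgClosed K]

lemma card_aroots_charpoly (T : Module.End k V) :
    (T.charpoly.aroots K).card = Module.finrank k V := by
  rw [IsAlgClosed.card_aroots_eq_natDegree, LinearMap.charpoly_natDegree]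

lemma sum_aroots_charpoly (T : Module.End k V) :
    (T.charpoly.aroots K).sum = algebraMap k K (LinearMap.trace k V T) := by
  rw [← LinearMap.trace_baseChange,
    Module.End.trace_eq_sum_roots_charpoly_of_splits (IsAlgClosed.splits _),
    LinearMap.charpoly_baseChange, aroots_def]

end Roots

lemma trace_restrict_eq_trace_mul {W : Submodule k V} {e D : Module.End k V}
    (he : LinearMap.IsProj W e) (hD : ∀ x ∈ W, D x ∈ W) :
    LinearMap.trace k W (D.restrict hD) = LinearMap.trace k V (D * e) := by
  have h : D * e = (D ∘ₗ W.subtype) ∘ₗ LinearMap.codRestrict W e he.map_mem := rfl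
  rw [h, LinearMap.trace_comp_comm']
  congr 1
  ext x
  exact (he.map_id _ (hD x x.2)).symm

lemma finrank_ne_one_of_trace_eq_zero {T : Module.End k V} {n : ℕ} (hn : n ≠ 0) (hT : T ^ n = 1)
    (htr : LinearMap.trace k V T = 0) : Module.finrank k V ≠ 1 := by
  intro h
  obtain ⟨c, hc, -⟩ := T.existsUnique_eq_smul_id_of_finrank_eq_one h
  have : Nontrivial V := Module.nontrivial_of_finrank_pos (h ▸ one_pos)
  obtain rfl : c = 0 := by simpa [hc, h] using htr
  rw [hc, zero_smul, zero_pow hn] at hT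
  exact zero_ne_one hT

variable [CharZero k]

lemma eq_one_of_trace_eq_finrank {T : Module.End k V} {n : ℕ} (hn : n ≠ 0) (hT : T ^ n = 1)
    (htr : LinearMap.trace k V T = Module.finrank k V) : T = 1 := by
  let K := AlgebraicClosure k
  have : NeZero (n : K) := ⟨Nat.cast_ne_zero.2 hn⟩
  obtain ⟨ζ, hζ⟩ := HasEnoughRootsOfUnity.exists_primitiveRoot K n
  have hroots : ∀ a ∈ T.charpoly.aroots K, a = 1 := by
    refine eq_one_of_sum_eq_card (Nat.pos_of_ne_zero hn) hζ
      (fun a ha ↦ pow_eq_one_of_mem_aroots_charpoly K hT ha) ?_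
    rw [card_aroots_charpoly, sum_aroots_charpoly, htr, map_natCast]
  have hcharpoly : T.charpoly = (X - C 1) ^ Module.finrank k V := by
    refine map_injective _ (algebraMap k K).injective ?_
    rw [(IsAlgClosed.splits _).eq_prod_roots_of_monic (T.charpoly_monic.map _), ← aroots_def,
      Multiset.eq_replicate.2 ⟨card_aroots_charpoly K T, hroots⟩]
    simp
  refine eq_one_of_isNilpotent_sub_one hn hT ⟨Module.finrank k V, ?_⟩
  simpa [hcharpoly] using T.aeval_self_charpoly

lemma prime_le_finrank_of_trace_eq_zero {T : Module.End k V} {r : ℕ} (hr : r.Prime)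
    (hr_odd : Odd r) (hT : T ^ (2 * r) = 1) (htr : LinearMap.trace k V T = 0)
    (hV : Odd (Module.finrank k V)) : r ≤ Module.finrank k V := by
  let K := AlgebraicClosure k
  have : NeZero (r : K) := ⟨Nat.cast_ne_zero.2 hr.ne_zero⟩
  obtain ⟨ζ, hζ⟩ := HasEnoughRootsOfUnity.exists_primitiveRoot K r
  rw [← card_aroots_charpoly K T] at hV ⊢
  refine prime_le_card_of_sum_eq_zero hr hr_odd hζ
    (fun a ha ↦ pow_eq_one_of_mem_aroots_charpoly K hT ha) ?_ hV
  rw [sum_aroots_charpoly, htr, map_zero]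

variable {T : Module.End k V}

lemma trace_restrict_eigenspace_one_eq_zero (hT : IsOfFinOrder T) {D : Module.End k V}
    (hD : ∀ x ∈ T.eigenspace 1, D x ∈ T.eigenspace 1)
    (htr : ∀ i, LinearMap.trace k V (D * T ^ i) = 0) :
    LinearMap.trace k (T.eigenspace 1) (D.restrict hD) = 0 := by
  simp [trace_restrict_eq_trace_mul (isProj_average hT) hD, Finset.mul_sum, htr]

section Commute

variable {D : Module.End k V} (hT : IsOfFinOrder T) (hTD : Commute T D)
  (htr : ∀ i, LinearMap.trace k V (D * T ^ i) = 0)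
include hT hTD htr

lemma finrank_eigenspace_one_ne_one {n : ℕ} (hn : n ≠ 0) (hD : D ^ n = 1) :
    Module.finrank k (T.eigenspace 1) ≠ 1 := by
  have hmap := Module.End.mapsTo_genEigenspace_of_comm hTD 1 1
  exact finrank_ne_one_of_trace_eq_zero hn (restrict_pow_eq_one hmap hD)
    (trace_restrict_eigenspace_one_eq_zero hT hmap htr)

lemma prime_le_finrank_eigenspace_one {r : ℕ} (hr : r.Prime) (hr_odd : Odd r)
    (hD : D ^ (2 * r) = 1) (hW : Odd (Module.finrank k (T.eigenspace 1))) :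
    r ≤ Module.finrank k (T.eigenspace 1) := by
  have hmap := Module.End.mapsTo_genEigenspace_of_comm hTD 1 1
  exact prime_le_finrank_of_trace_eq_zero hr hr_odd (restrict_pow_eq_one hmap hD)
    (trace_restrict_eigenspace_one_eq_zero hT hmap htr) hW

end Commute

lemma finrank_eigenspace_one_mul_orderOf (hT : IsOfFinOrder T)
    (htr : ∀ i, LinearMap.trace k V (T ^ i) ^ 2 =
      Module.finrank k V * LinearMap.trace k V (T ^ i)) :
    Module.finrank k (T.eigenspace 1) * orderOf T = Module.finrank k V := by
  have hzero : ∀ i ∈ Finset.range (orderOf T), i ≠ 0 → LinearMap.trace k V (T ^ i) = 0 := by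
    intro i hi hi0
    by_contra h0
    have htr_eq : LinearMap.trace k V (T ^ i) = Module.finrank k V :=
      mul_right_cancel₀ h0 (by rw [← sq, htr i])
    have hone : T ^ i = 1 := eq_one_of_trace_eq_finrank hT.orderOf_pos.ne'
      (by rw [pow_right_comm, pow_orderOf_eq_one, one_pow]) htr_eq
    exact hi0 (Nat.eq_zero_of_dvd_of_lt (orderOf_dvd_of_pow_eq_one hone) (Finset.mem_range.1 hi))
  have htrace := (isProj_average hT).trace
  rw [map_smul, map_sum, Finset.sum_eq_single_of_mem 0 (Finset.mem_range.2 hT.orderOf_pos) hzero,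
    pow_zero, LinearMap.trace_one, smul_eq_mul,
    inv_mul_eq_iff_eq_mul₀ (Nat.cast_ne_zero.2 hT.orderOf_pos.ne')] at htrace
  rw [mul_comm]
  exact_mod_cast htrace.symm

end FiniteOrder

section Hit

open Coalgebra WithConv

variable {k C : Type*} [CommSemiring k] [AddCommMonoid C] [Module k C] [Coalgebra k C]

/-- The left hit action `f ⇀ x = ∑ f(x₂) x₁` of the dual of a coalgebra on the coalgebra. -/
noncomputable def leftHit : (C →ₗ[k] k) →ₗ[k] C →ₗ[k] C where
  toFun f := TensorProduct.rid k C ∘ₗ f.lTensor C ∘ₗ comul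
  map_add' f g := by simp only [LinearMap.lTensor_add, LinearMap.add_comp, LinearMap.comp_add]
  map_smul' c f := by
    simp only [LinearMap.lTensor_smul, LinearMap.smul_comp, LinearMap.comp_smul, RingHom.id_apply]

/-- The right hit action `x ↼ f = ∑ f(x₁) x₂` of the dual of a coalgebra on the coalgebra. -/
noncomputable def rightHit : (C →ₗ[k] k) →ₗ[k] C →ₗ[k] C where
  toFun f := TensorProduct.lid k C ∘ₗ f.rTensor C ∘ₗ comul
  map_add' f g := by simp only [LinearMap.rTensor_add, LinearMap.add_comp, LinearMap.comp_add]
  map_smul' c f := by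
    simp only [LinearMap.rTensor_smul, LinearMap.smul_comp, LinearMap.comp_smul, RingHom.id_apply]

lemma leftHit_def (f : C →ₗ[k] k) :
    leftHit f = TensorProduct.rid k C ∘ₗ f.lTensor C ∘ₗ comul := rfl

lemma rightHit_def (f : C →ₗ[k] k) :
    rightHit f = TensorProduct.lid k C ∘ₗ f.rTensor C ∘ₗ comul := rfl

lemma leftHit_eq_sum {ι : Type*} {x : C} (r : Repr k x ι) (f : C →ₗ[k] k) :
    leftHit f x = ∑ i ∈ r.index, f (r.right i) • r.left i := by
  simp [leftHit_def, ← r.eq]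

lemma rightHit_eq_sum {ι : Type*} {x : C} (r : Repr k x ι) (f : C →ₗ[k] k) :
    rightHit f x = ∑ i ∈ r.index, f (r.left i) • r.right i := by
  simp [rightHit_def, ← r.eq]

lemma apply_leftHit (f g : C →ₗ[k] k) (x : C) : f (leftHit g x) = g (rightHit f x) := by
  simp [leftHit_eq_sum (ℛ k x), rightHit_eq_sum (ℛ k x), mul_comm]

lemma leftHit_counit : leftHit (counit (R := k) (A := C)) = .id := by
  ext x
  simp [leftHit_def]

lemma rightHit_counit : rightHit (counit (R := k) (A := C)) = .id := by
  ext x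
  simp [rightHit_def]

lemma counit_comp_leftHit (f : C →ₗ[k] k) : counit ∘ₗ leftHit f = f := by
  ext x
  simp [apply_leftHit, rightHit_counit]

lemma counit_comp_rightHit (f : C →ₗ[k] k) : counit ∘ₗ rightHit f = f := by
  ext x
  simp [← apply_leftHit, leftHit_counit]

lemma comul_comp_leftHit (f : C →ₗ[k] k) :
    comul ∘ₗ leftHit f = (leftHit f).lTensor C ∘ₗ comul (R := k) := by
  have h : comul ∘ₗ TensorProduct.rid k C ∘ₗ f.lTensor C =
      (TensorProduct.rid k C ∘ₗ f.lTensor C).lTensor C ∘ₗ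
        TensorProduct.assoc k C C C ∘ₗ comul.rTensor C := by
    refine TensorProduct.ext' fun x y ↦ ?_
    simp [← (ℛ k x).eq, TensorProduct.sum_tmul, Finset.smul_sum]
  calc comul ∘ₗ leftHit f = _ := congr($h ∘ₗ comul)
    _ = (TensorProduct.rid k C ∘ₗ f.lTensor C).lTensor C ∘ₗ comul.lTensor C ∘ₗ comul := by
      rw [← coassoc]
      rfl
    _ = (leftHit f).lTensor C ∘ₗ comul := by
      rw [← LinearMap.comp_assoc, ← LinearMap.lTensor_comp]
      rfl

lemma comul_comp_rightHit (f : C →ₗ[k] k) :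
    comul ∘ₗ rightHit f = (rightHit f).rTensor C ∘ₗ comul (R := k) := by
  have h : comul ∘ₗ TensorProduct.lid k C ∘ₗ f.rTensor C =
      (TensorProduct.lid k C ∘ₗ f.rTensor C).rTensor C ∘ₗ
        (TensorProduct.assoc k C C C).symm ∘ₗ comul.lTensor C := by
    refine TensorProduct.ext' fun x y ↦ ?_
    simp [← (ℛ k y).eq, TensorProduct.tmul_sum, Finset.smul_sum, TensorProduct.smul_tmul']
  calc comul ∘ₗ rightHit f = _ := congr($h ∘ₗ comul)
    _ = (TensorProduct.lid k C ∘ₗ f.rTensor C).rTensor C ∘ₗ comul.rTensor C ∘ₗ comul := by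
      rw [← coassoc_symm]
      rfl
    _ = (rightHit f).rTensor C ∘ₗ comul := by
      rw [← LinearMap.comp_assoc, ← LinearMap.rTensor_comp]
      rfl

lemma leftHit_comp_leftHit (f g : C →ₗ[k] k) :
    leftHit f ∘ₗ leftHit g = leftHit (f ∘ₗ leftHit g) := by
  calc leftHit f ∘ₗ leftHit g = TensorProduct.rid k C ∘ₗ f.lTensor C ∘ₗ comul ∘ₗ leftHit g := rfl
    _ = TensorProduct.rid k C ∘ₗ (f ∘ₗ leftHit g).lTensor C ∘ₗ comul := by
      rw [comul_comp_leftHit, LinearMap.lTensor_comp]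
      rfl

lemma rightHit_comp_rightHit (f g : C →ₗ[k] k) :
    rightHit f ∘ₗ rightHit g = rightHit (f ∘ₗ rightHit g) := by
  calc rightHit f ∘ₗ rightHit g
      = TensorProduct.lid k C ∘ₗ f.rTensor C ∘ₗ comul ∘ₗ rightHit g := rfl
    _ = TensorProduct.lid k C ∘ₗ (f ∘ₗ rightHit g).rTensor C ∘ₗ comul := by
      rw [comul_comp_rightHit, LinearMap.rTensor_comp]
      rfl

section Convolution

variable {A : Type*} [Semiring A] [Algebra k A]

lemma toConv_comp_leftHit (F : C →ₗ[k] A) (f : C →ₗ[k] k) :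
    toConv (F ∘ₗ leftHit f) = toConv F * toConv (Algebra.linearMap k A ∘ₗ f) := by
  ext x
  simp [(ℛ k x).convMul_apply, leftHit_eq_sum (ℛ k x), Algebra.smul_def, Algebra.commutes]

lemma toConv_comp_rightHit (F : C →ₗ[k] A) (f : C →ₗ[k] k) :
    toConv (F ∘ₗ rightHit f) = toConv (Algebra.linearMap k A ∘ₗ f) * toConv F := by
  ext x
  simp [(ℛ k x).convMul_apply, rightHit_eq_sum (ℛ k x), Algebra.smul_def]

end Convolution

lemma leftHit_pow (f : C →ₗ[k] k) (n : ℕ) : leftHit f ^ n = leftHit (toConv f ^ n).ofConv := by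
  induction n with
  | zero => exact leftHit_counit.symm
  | succ n ih =>
    rw [pow_succ, ih, Module.End.mul_eq_comp, leftHit_comp_leftHit, pow_succ]
    congr 1
    exact congr($(toConv_comp_leftHit (toConv f ^ n).ofConv f).ofConv)

lemma rightHit_pow (f : C →ₗ[k] k) (n : ℕ) : rightHit f ^ n = rightHit (toConv f ^ n).ofConv := by
  induction n with
  | zero => exact rightHit_counit.symm
  | succ n ih =>
    rw [pow_succ, ih, Module.End.mul_eq_comp, rightHit_comp_rightHit, pow_succ']
    congr 1
    exact congr($(toConv_comp_rightHit (toConv f ^ n).ofConv f).ofConv)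

lemma rightHit_injective : Function.Injective (rightHit (k := k) (C := C)) := fun f g h ↦ by
  rw [← counit_comp_rightHit f, h, counit_comp_rightHit]

lemma leftHit_isGroupLikeElem {u : C} (hu : IsGroupLikeElem k u) (f : C →ₗ[k] k) :
    leftHit f u = f u • u := by
  simp [leftHit_def, hu.comul_eq_tmul_self]

lemma rightHit_isGroupLikeElem {u : C} (hu : IsGroupLikeElem k u) (f : C →ₗ[k] k) :
    rightHit f u = f u • u := by
  simp [rightHit_def, hu.comul_eq_tmul_self]

lemma leftHit_one {k H : Type*} [CommSemiring k] [Semiring H] [Bialgebra k H] (f : H →ₗ[k] k) :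
    leftHit f 1 = f 1 • 1 := by
  simp [leftHit_def, Algebra.TensorProduct.one_def]

end Hit

section Antipode

open Coalgebra HopfAlgebra WithConv

variable {k H : Type*} [CommSemiring k] [Semiring H] [HopfAlgebra k H]

section Character

variable {A : Type*} [Semiring A] [Algebra k A]

lemma toConv_algHom_mul_toConv_comp_antipode (φ : H →ₐ[k] A) :
    toConv φ.toLinearMap * toConv (φ.toLinearMap ∘ₗ antipode k) = 1 := by
  ext x
  simpa [(ℛ k x).convMul_apply] using congr(φ $(sum_mul_antipode_eq_algebraMap_counit (ℛ k x)))

lemma toConv_comp_antipode_mul_toConv_algHom (φ : H →ₐ[k] A) :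
    toConv (φ.toLinearMap ∘ₗ antipode k) * toConv φ.toLinearMap = 1 := by
  ext x
  simpa [(ℛ k x).convMul_apply] using congr(φ $(sum_antipode_mul_eq_algebraMap_counit (ℛ k x)))

/-- The algebra endomorphism `x ↦ χ ⇀ x` attached to a character `χ`. -/
noncomputable def leftHitAlgHom (χ : H →ₐ[k] k) : H →ₐ[k] H :=
  (Algebra.TensorProduct.rid k k H).toAlgHom.comp
    ((Algebra.TensorProduct.map (.id k H) χ).comp (Bialgebra.comulAlgHom k H))

/-- The algebra endomorphism `x ↦ x ↼ χ` attached to a character `χ`. -/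
noncomputable def rightHitAlgHom (χ : H →ₐ[k] k) : H →ₐ[k] H :=
  (Algebra.TensorProduct.lid k H).toAlgHom.comp
    ((Algebra.TensorProduct.map χ (.id k H)).comp (Bialgebra.comulAlgHom k H))

lemma rightHit_comp_antipode_comp_leftHit (χ : H →ₐ[k] k) :
    rightHit χ.toLinearMap ∘ₗ antipode k ∘ₗ leftHit χ.toLinearMap = antipode k := by
  have h : toConv ((rightHit χ.toLinearMap ∘ₗ antipode k) ∘ₗ leftHit χ.toLinearMap) *
      toConv .id = 1 := by
    rw [toConv_comp_leftHit, mul_assoc, ← toConv_comp_rightHit]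
    exact toConv_comp_antipode_mul_toConv_algHom (rightHitAlgHom χ)
  exact toConv_injective (left_inv_eq_right_inv h LinearMap.id_mul_antipode)

lemma leftHit_comp_antipode_comp_rightHit (χ : H →ₐ[k] k) :
    leftHit χ.toLinearMap ∘ₗ antipode k ∘ₗ rightHit χ.toLinearMap = antipode k := by
  have h : toConv .id *
      toConv ((leftHit χ.toLinearMap ∘ₗ antipode k) ∘ₗ rightHit χ.toLinearMap) = 1 := by
    rw [toConv_comp_rightHit, ← mul_assoc, ← toConv_comp_leftHit]
    exact toConv_algHom_mul_toConv_comp_antipode (leftHitAlgHom χ)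
  exact toConv_injective (left_inv_eq_right_inv LinearMap.antipode_mul_id h).symm

lemma rightHit_antipode_antipode (χ : H →ₐ[k] k) (x : H) :
    rightHit χ.toLinearMap (antipode k (antipode k x)) =
      antipode k (antipode k (rightHit χ.toLinearMap x)) := by
  have hl := congr($(leftHit_comp_antipode_comp_rightHit χ) x)
  have hr := congr($(rightHit_comp_antipode_comp_leftHit χ) (antipode k (rightHit χ.toLinearMap x)))
  simp only [LinearMap.comp_apply] at hl hr
  rw [← hr, hl]

end Character

lemma commute_antipode_sq_rightHit (χ : H →ₐ[k] k) :
    Commute ((antipode k : Module.End k H) ^ 2) (rightHit χ.toLinearMap) :=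
  LinearMap.ext fun x ↦ (rightHit_antipode_antipode χ x).symm

lemma sum_antipode_rightHit_mul {ι : Type*} {a : H} (r : Repr k a ι) (f : H →ₗ[k] k) :
    ∑ i ∈ r.index, antipode k (rightHit f (r.left i)) * r.right i = algebraMap k H (f a) := by
  have h : toConv (antipode k ∘ₗ rightHit f) * toConv .id =
      toConv (Algebra.linearMap k H ∘ₗ f) := by
    rw [toConv_comp_rightHit, mul_assoc, LinearMap.antipode_mul_id, mul_one]
  simpa [r.convMul_apply] using congr($h a)

lemma rightHit_mul {ι : Type*} {x : H} (r : Repr k x ι) (f : H →ₗ[k] k) (a : H) :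
    rightHit f (a * x) =
      ∑ i ∈ r.index, rightHit (f ∘ₗ LinearMap.mulRight k (r.left i)) a * r.right i := by
  simp [rightHit_eq_sum ((ℛ k a).mul r), rightHit_eq_sum (ℛ k a), Finset.sum_product,
    Finset.sum_comm (s := r.index), Finset.sum_mul]

lemma antipode_rightHit_comp_mulLeft {ι : Type*} {a : H} (r : Repr k a ι) (f : H →ₗ[k] k) (x : H) :
    antipode k (rightHit (f ∘ₗ LinearMap.mulLeft k a) x) =
      ∑ j ∈ r.index, antipode k (rightHit f (r.left j * x)) * r.right j := by
  simp only [rightHit_mul (ℛ k x), map_sum, antipode_mul_antidistrib, Finset.sum_mul, mul_assoc]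
  rw [Finset.sum_comm]
  simp [← Finset.mul_sum, sum_antipode_rightHit_mul, rightHit_eq_sum (ℛ k x), ← Algebra.commutes,
    ← Algebra.smul_def]

end Antipode

section Integral

open Coalgebra HopfAlgebra Module

variable {k H : Type*} [Field k] [Ring H] [HopfAlgebra k H] [FiniteDimensional k H]

/-- The element `Λ` of `H` with `f(Λ) = tr(x ↦ S²(x ↼ f) y)` for every `f` in the dual of `H`. -/
noncomputable def traceIntegral (y : H) : H :=
  (evalEquiv k H).symm (LinearMap.trace k H ∘ₗ
    (LinearMap.mulRight k y ∘ₗ antipode k ∘ₗ antipode k).compRight k ∘ₗ rightHit)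

lemma apply_traceIntegral (y : H) (f : H →ₗ[k] k) :
    f (traceIntegral (k := k) y) =
      LinearMap.trace k H (LinearMap.mulRight k y ∘ₗ antipode k ∘ₗ antipode k ∘ₗ rightHit f) :=
  apply_evalEquiv_symm_apply _ _ f _

lemma isLeftIntegral_traceIntegral (y : H) : IsLeftIntegral k (traceIntegral (k := k) y) := by
  intro a
  refine (evalEquiv k H).injective (LinearMap.ext fun f ↦ ?_)
  rw [evalEquiv_apply, evalEquiv_apply]
  set r := ℛ k a
  set T := LinearMap.mulRight k y ∘ₗ antipode k ∘ₗ antipode k ∘ₗ rightHit f with hT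
  have hfa : LinearMap.mulRight k y ∘ₗ antipode k ∘ₗ antipode k ∘ₗ
      rightHit (f ∘ₗ LinearMap.mulLeft k a) = ∑ j ∈ r.index,
        LinearMap.mulLeft k (antipode k (r.right j)) * T * LinearMap.mulLeft k (r.left j) := by
    ext x
    simp [antipode_rightHit_comp_mulLeft r, hT, antipode_mul_antidistrib, mul_assoc]
  have hr : ∑ j ∈ r.index, LinearMap.mulLeft k (r.left j * antipode k (r.right j)) =
      counit (R := k) a • 1 := by
    ext x
    simp [← Finset.sum_mul, sum_mul_antipode_eq_smul, -LinearMap.mulLeft_mul]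
  calc f (a * traceIntegral (k := k) y)
      = LinearMap.trace k H (LinearMap.mulRight k y ∘ₗ antipode k ∘ₗ antipode k ∘ₗ
          rightHit (f ∘ₗ LinearMap.mulLeft k a)) :=
        apply_traceIntegral y (f ∘ₗ LinearMap.mulLeft k a)
    _ = LinearMap.trace k H ((∑ j ∈ r.index,
          LinearMap.mulLeft k (r.left j * antipode k (r.right j))) * T) := by
      simp_rw [hfa, Finset.sum_mul, map_sum, LinearMap.mulLeft_mul, ← Module.End.mul_eq_comp]
      refine Finset.sum_congr rfl fun j _ ↦ ?_
      rw [LinearMap.trace_mul_comm, mul_assoc]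
    _ = f (counit (R := k) a • traceIntegral (k := k) y) := by
      rw [hr, smul_mul_assoc, one_mul, map_smul, map_smul, hT, apply_traceIntegral]

lemma sum_apply_traceIntegral {ι : Type*} [Fintype ι] (b : Basis ι k H) :
    ∑ i, (b.coord i ∘ₗ antipode k) (traceIntegral (k := k) (b i)) = 1 := by
  have hrank : ∑ i, LinearMap.mulRight k (b i) ∘ₗ antipode k ∘ₗ antipode k ∘ₗ
      rightHit (b.coord i ∘ₗ antipode k) = (counit (R := k)).smulRight (1 : H) := by
    ext x
    have h (y z : H) : ∑ i, b.repr (antipode k y) i • (z * b i) = z * antipode k y := by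
      simp_rw [← mul_smul_comm, ← Finset.mul_sum, b.sum_repr]
    simp only [rightHit_eq_sum (ℛ k x), LinearMap.sum_apply, LinearMap.comp_apply, map_sum,
      map_smul]
    rw [Finset.sum_comm]
    simpa [h, ← antipode_mul_antidistrib] using
      congr(antipode k $(sum_mul_antipode_eq_smul (ℛ k x)))
  simp_rw [apply_traceIntegral, ← map_sum, hrank]
  simp

theorem exists_isLeftIntegral_ne_zero : ∃ L : H, L ≠ 0 ∧ IsLeftIntegral k L := by
  by_contra! h
  have hzero (y : H) : traceIntegral (k := k) y = 0 := by
    by_contra hy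
    exact h _ hy (isLeftIntegral_traceIntegral y)
  simpa [hzero] using sum_apply_traceIntegral (finBasis k H)

end Integral

section Frobenius

open Coalgebra HopfAlgebra WithConv Module

section

variable {k H : Type*} [CommSemiring k] [Semiring H] [HopfAlgebra k H]

lemma toConv_comul :
    (toConv comul : WithConv (H →ₗ[k] H ⊗[k] H)) =
      toConv Algebra.TensorProduct.includeLeft.toLinearMap *
        toConv Algebra.TensorProduct.includeRight.toLinearMap := by
  ext x
  rw [(ℛ k x).convMul_apply]
  simp [← (ℛ k x).eq]

lemma sum_antipode_tmul_one_mul_comul {ι : Type*} {a : H} (r : Repr k a ι) :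
    ∑ i ∈ r.index, (antipode k (r.left i) ⊗ₜ[k] (1 : H)) * comul (r.right i) = 1 ⊗ₜ a := by
  have h : toConv (Algebra.TensorProduct.includeLeft.toLinearMap ∘ₗ antipode k) * toConv comul =
      toConv (Algebra.TensorProduct.includeRight : H →ₐ[k] H ⊗[k] H).toLinearMap := by
    rw [toConv_comul, ← mul_assoc, toConv_comp_antipode_mul_toConv_algHom, one_mul]
  simpa [r.convMul_apply] using congr($h a)

lemma sum_comul_mul_one_tmul_antipode {ι : Type*} {a : H} (r : Repr k a ι) :
    ∑ i ∈ r.index, comul (r.left i) * ((1 : H) ⊗ₜ[k] antipode k (r.right i)) = a ⊗ₜ 1 := by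
  have h : toConv comul * toConv (Algebra.TensorProduct.includeRight.toLinearMap ∘ₗ antipode k) =
      toConv (Algebra.TensorProduct.includeLeft : H →ₐ[k] H ⊗[k] H).toLinearMap := by
    rw [toConv_comul, mul_assoc, toConv_algHom_mul_toConv_comp_antipode, mul_one]
  simpa [r.convMul_apply] using congr($h a)

variable {L : H}

namespace IsLeftIntegral

lemma one_tmul_mul_comul (hL : IsLeftIntegral k L) (a : H) :
    ((1 : H) ⊗ₜ[k] a) * comul L = (antipode k a ⊗ₜ 1) * comul L := by
  have ha : ∑ i ∈ (ℛ k a).index, counit (R := k) ((ℛ k a).right i) • (ℛ k a).left i = a := by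
    rw [← leftHit_eq_sum (ℛ k a), leftHit_counit, LinearMap.id_apply]
  conv_rhs => rw [← ha]
  rw [← sum_antipode_tmul_one_mul_comul (ℛ k a)]
  simp only [Finset.sum_mul, mul_assoc, ← Bialgebra.comul_mul, hL _, map_smul, map_sum,
    TensorProduct.sum_tmul, ← TensorProduct.smul_tmul', smul_mul_assoc, mul_smul_comm]

lemma leftHit_comp_mulLeft (hL : IsLeftIntegral k L) (f : H →ₗ[k] k) (a : H) :
    leftHit (f ∘ₗ LinearMap.mulLeft k a) L = antipode k a * leftHit f L := by
  have h := congr(TensorProduct.rid k H (f.lTensor H $(hL.one_tmul_mul_comul a)))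
  rw [← (ℛ k L).eq] at h
  simpa [leftHit_eq_sum (ℛ k L), Finset.mul_sum] using h

lemma rightHit_comp_mulLeft_antipode (hL : IsLeftIntegral k L) (f : H →ₗ[k] k) (a : H) :
    rightHit (f ∘ₗ LinearMap.mulLeft k (antipode k a)) L = a * rightHit f L := by
  have h := congr(TensorProduct.lid k H (f.rTensor H $(hL.one_tmul_mul_comul a)))
  rw [← (ℛ k L).eq] at h
  simpa [rightHit_eq_sum (ℛ k L), Finset.mul_sum] using h.symm

end IsLeftIntegral

lemma comul_mul_tmul_one {α : H →ₐ[k] k} (hα : ∀ a, L * a = α a • L) (a : H) :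
    comul L * (a ⊗ₜ[k] (1 : H)) = comul L * (1 ⊗ₜ antipode k (rightHit α.toLinearMap a)) := by
  rw [← sum_comul_mul_one_tmul_antipode (ℛ k a), rightHit_eq_sum (ℛ k a)]
  simp only [Finset.mul_sum, ← mul_assoc, ← Bialgebra.comul_mul, hα, map_smul, map_sum,
    TensorProduct.tmul_sum, TensorProduct.tmul_smul, smul_mul_assoc, mul_smul_comm,
    AlgHom.toLinearMap_apply]

lemma rightHit_comp_mulRight {α : H →ₐ[k] k} (hα : ∀ a, L * a = α a • L) (f : H →ₗ[k] k) (a : H) :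
    rightHit (f ∘ₗ LinearMap.mulRight k a) L =
      rightHit f L * antipode k (rightHit α.toLinearMap a) := by
  have h := congr(TensorProduct.lid k H (f.rTensor H $(comul_mul_tmul_one hα a)))
  rw [← (ℛ k L).eq] at h
  simpa [rightHit_eq_sum (ℛ k L), Finset.sum_mul] using h

lemma leftHit_comp_mulRight_antipode {α : H →ₐ[k] k} (hα : ∀ a, L * a = α a • L)
    (f : H →ₗ[k] k) (a : H) :
    leftHit (f ∘ₗ LinearMap.mulRight k (antipode k (rightHit α.toLinearMap a))) L =
      leftHit f L * a := by
  have h := congr(TensorProduct.rid k H (f.lTensor H $(comul_mul_tmul_one hα a)))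
  rw [← (ℛ k L).eq] at h
  simpa [leftHit_eq_sum (ℛ k L), Finset.sum_mul] using h.symm

end

variable {k H : Type*} [Field k] [Ring H] [HopfAlgebra k H]

lemma sum_coord_antipode_comp_leftHit_comp_mulLeft {ι : Type*} [Fintype ι] (b : Basis ι k H)
    (f : H →ₗ[k] k) :
    ∑ i, (b.coord i ∘ₗ antipode k) ∘ₗ leftHit (f ∘ₗ LinearMap.mulLeft k (b i)) =
      f 1 • counit := by
  have hb (y z : H) : ∑ i, b.repr y i * f (b i * z) = f (y * z) := by
    conv_rhs => rw [← b.sum_repr y, Finset.sum_mul, map_sum]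
    simp only [smul_mul_assoc, map_smul, smul_eq_mul]
  ext x
  simp only [LinearMap.sum_apply, LinearMap.comp_apply, leftHit_eq_sum (ℛ k x), map_sum, map_smul]
  rw [Finset.sum_comm]
  simpa [hb, mul_comm] using congr(f $(sum_antipode_mul_eq_smul (ℛ k x)))

namespace IsLeftIntegral

variable [FiniteDimensional k H] {L : H}

lemma leftHit_injective (hL : IsLeftIntegral k L) (h0 : L ≠ 0) :
    Function.Injective (leftHit.flip L : (H →ₗ[k] k) →ₗ[k] H) := by
  refine (injective_iff_map_eq_zero _).2 fun f hf ↦ ?_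
  have hmul (a : H) : leftHit (f ∘ₗ LinearMap.mulLeft k a) L = 0 := by
    rw [hL.leftHit_comp_mulLeft, ← LinearMap.flip_apply, hf, mul_zero]
  have hone (u : H →ₗ[k] k) (hu : ∀ a, leftHit (u ∘ₗ LinearMap.mulLeft k a) L = 0) : u 1 = 0 := by
    have h := congr(leftHit $(sum_coord_antipode_comp_leftHit_comp_mulLeft (finBasis k H) u) L)
    simpa [← leftHit_comp_leftHit, hu, leftHit_counit, h0] using h.symm
  ext a
  simpa using hone (f ∘ₗ LinearMap.mulLeft k a) fun c ↦ by
    rw [LinearMap.comp_assoc, ← LinearMap.mulLeft_mul, hmul]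

lemma leftHit_surjective (hL : IsLeftIntegral k L) (h0 : L ≠ 0) :
    Function.Surjective (leftHit.flip L : (H →ₗ[k] k) →ₗ[k] H) :=
  (LinearMap.injective_iff_surjective_of_finrank_eq_finrank Subspace.dual_finrank_eq).1
    (hL.leftHit_injective h0)

lemma rightHit_injective (hL : IsLeftIntegral k L) (h0 : L ≠ 0) :
    Function.Injective (rightHit.flip L : (H →ₗ[k] k) →ₗ[k] H) := by
  refine (injective_iff_map_eq_zero _).2 fun f hf ↦ LinearMap.ext fun x ↦ ?_
  obtain ⟨u, rfl⟩ := hL.leftHit_surjective h0 x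
  rw [LinearMap.flip_apply, apply_leftHit, ← LinearMap.flip_apply, hf, map_zero,
    LinearMap.zero_apply]

lemma rightHit_surjective (hL : IsLeftIntegral k L) (h0 : L ≠ 0) :
    Function.Surjective (rightHit.flip L : (H →ₗ[k] k) →ₗ[k] H) :=
  (LinearMap.injective_iff_surjective_of_finrank_eq_finrank Subspace.dual_finrank_eq).1
    (hL.rightHit_injective h0)

end IsLeftIntegral

lemma antipode_injective [FiniteDimensional k H] :
    Function.Injective (antipode k : H →ₗ[k] H) := by
  obtain ⟨L, h0, hL⟩ := exists_isLeftIntegral_ne_zero (k := k) (H := H)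
  obtain ⟨f, hf⟩ := hL.rightHit_surjective h0 1
  refine (injective_iff_map_eq_zero _).2 fun a ha ↦ ?_
  have h := hL.rightHit_comp_mulLeft_antipode f a
  rw [← LinearMap.flip_apply rightHit f, hf] at h
  simpa [ha] using h.symm

lemma antipode_surjective [FiniteDimensional k H] :
    Function.Surjective (antipode k : H →ₗ[k] H) :=
  LinearMap.injective_iff_surjective.1 antipode_injective

end Frobenius

section IntegralPair

open Coalgebra HopfAlgebra Module

/-- A left integral `Λ` of `H` together with a form `μ` normalised by `μ ⇀ Λ = 1`. Such a `μ` is an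
integral of the dual of `H`, see `IntegralPair.leftHit_μ_apply`. -/
structure IntegralPair (k H : Type*) [CommSemiring k] [Semiring H] [HopfAlgebra k H] where
  /-- The integral of `H`. -/
  Λ : H
  /-- The integral of the dual of `H`. -/
  μ : H →ₗ[k] k
  isLeftIntegral : IsLeftIntegral k Λ
  leftHit_μ_Λ : leftHit μ Λ = 1

variable {k H : Type*} [Field k] [Ring H] [HopfAlgebra k H]

instance [FiniteDimensional k H] : Nonempty (IntegralPair k H) := by
  obtain ⟨L, h0, hL⟩ := exists_isLeftIntegral_ne_zero (k := k) (H := H)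
  obtain ⟨f, hf⟩ := hL.leftHit_surjective h0 1
  exact ⟨⟨L, f, hL, hf⟩⟩

namespace IntegralPair

variable (P : IntegralPair k H)

lemma leftHit_comp_mulLeft (a : H) : leftHit (P.μ ∘ₗ LinearMap.mulLeft k a) P.Λ = antipode k a := by
  rw [P.isLeftIntegral.leftHit_comp_mulLeft, P.leftHit_μ_Λ, mul_one]

lemma μ_Λ : P.μ P.Λ = 1 := by
  simpa [P.leftHit_μ_Λ] using congr($(counit_comp_leftHit P.μ) P.Λ).symm

lemma Λ_ne_zero : P.Λ ≠ 0 := fun h ↦ by simpa [h] using P.μ_Λ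

variable [FiniteDimensional k H]

lemma form_ext {f f' : H →ₗ[k] k} (h : leftHit f P.Λ = leftHit f' P.Λ) : f = f' :=
  P.isLeftIntegral.leftHit_injective P.Λ_ne_zero h

lemma leftHit_μ_apply (x : H) : leftHit P.μ x = P.μ x • 1 := by
  have h (f : H →ₗ[k] k) : f ∘ₗ leftHit P.μ = f 1 • P.μ := P.form_ext <| by
    rw [← leftHit_comp_leftHit, LinearMap.comp_apply, P.leftHit_μ_Λ, leftHit_one, map_smul,
      LinearMap.smul_apply, P.leftHit_μ_Λ]
  refine (evalEquiv k H).injective (LinearMap.ext fun f ↦ ?_)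
  simpa [mul_comm] using congr($(h f) x)

lemma eq_smul_Λ {L : H} (hL : IsLeftIntegral k L) : L = P.μ L • P.Λ := by
  obtain ⟨a, ha⟩ := antipode_surjective (k := k) P.Λ
  have hμ : P.μ ∘ₗ LinearMap.mulLeft k a = counit := P.form_ext <| by
    rw [P.leftHit_comp_mulLeft, ha, leftHit_counit, LinearMap.id_apply]
  have h := hL.leftHit_comp_mulLeft P.μ a
  rwa [hμ, leftHit_counit, LinearMap.id_apply, P.leftHit_μ_apply, ha, mul_smul_one] at h

lemma Λ_mul (a : H) : P.Λ * a = P.μ (P.Λ * a) • P.Λ :=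
  P.eq_smul_Λ fun b ↦ by rw [← mul_assoc, P.isLeftIntegral, smul_mul_assoc]

/-- The modular function of `H`: the character `α` with `Λ a = α(a) Λ`. -/
noncomputable def modularFunction : H →ₐ[k] k :=
  AlgHom.ofLinearMap (P.μ ∘ₗ LinearMap.mulLeft k P.Λ) (by simpa using P.μ_Λ) fun a b ↦ by
    simp only [LinearMap.comp_apply, LinearMap.mulLeft_apply]
    conv_lhs => rw [← mul_assoc, P.Λ_mul a, smul_mul_assoc, map_smul, smul_eq_mul]

lemma Λ_mul_eq_modularFunction_smul (a : H) : P.Λ * a = P.modularFunction a • P.Λ := P.Λ_mul a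

/-- The modular element of `H`: the group-like `g` with `μ(x₁) x₂ = μ(x) g`. -/
noncomputable def modularElement : H := rightHit P.μ P.Λ

lemma rightHit_μ_apply (x : H) : rightHit P.μ x = P.μ x • P.modularElement := by
  have h (f : H →ₗ[k] k) : P.μ ∘ₗ leftHit f = f P.modularElement • P.μ := P.form_ext <| by
    rw [← leftHit_comp_leftHit, LinearMap.comp_apply, P.leftHit_μ_apply, apply_leftHit, map_smul,
      LinearMap.smul_apply, P.leftHit_μ_Λ, modularElement]
  refine (evalEquiv k H).injective (LinearMap.ext fun f ↦ ?_)
  simpa [apply_leftHit, mul_comm] using congr($(h f) x)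

lemma isGroupLikeElem_modularElement : IsGroupLikeElem k P.modularElement where
  counit_eq_one := by
    rw [modularElement, ← P.μ_Λ]
    exact congr($(counit_comp_rightHit P.μ) P.Λ)
  comul_eq_tmul_self := by
    have h : (rightHit P.μ).rTensor H =
        TensorProduct.mk k H H P.modularElement ∘ₗ TensorProduct.lid k H ∘ₗ P.μ.rTensor H := by
      refine TensorProduct.ext' fun x y ↦ ?_
      simp [P.rightHit_μ_apply, TensorProduct.smul_tmul]
    calc comul P.modularElement = (comul ∘ₗ rightHit P.μ) P.Λ := rfl
      _ = P.modularElement ⊗ₜ P.modularElement := by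
        rw [comul_comp_rightHit, LinearMap.comp_apply, h]
        rfl

lemma μ_mul_antipode_antipode (x c : H) :
    P.μ (x * antipode k (antipode k c)) =
      P.μ (leftHit P.modularFunction.toLinearMap c * x) := by
  set α := P.modularFunction.toLinearMap
  have hα : rightHit α (antipode k (leftHit α c)) = antipode k c :=
    congr($(rightHit_comp_antipode_comp_leftHit P.modularFunction) c)
  have h : P.μ ∘ₗ LinearMap.mulRight k (antipode k (antipode k c)) =
      P.μ ∘ₗ LinearMap.mulLeft k (leftHit α c) := P.form_ext <| by
    rw [P.leftHit_comp_mulLeft, ← hα, leftHit_comp_mulRight_antipode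
      P.Λ_mul_eq_modularFunction_smul, P.leftHit_μ_Λ, one_mul]
  exact congr($h x)

lemma antipode_modularElement_mul : antipode k P.modularElement * P.modularElement = 1 :=
  P.isGroupLikeElem_modularElement.antipode_mul_cancel

theorem antipode_pow_four_mul_rightHit :
    (antipode k : End k H) ^ 4 * rightHit P.modularFunction.toLinearMap =
      LinearMap.mulLeft k (antipode k P.modularElement) * LinearMap.mulRight k P.modularElement *
        leftHit P.modularFunction.toLinearMap := by
  ext c
  set g := P.modularElement
  set α := P.modularFunction.toLinearMap
  obtain ⟨a, ha⟩ := antipode_surjective (k := k) (leftHit α c)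
  have hμ : P.μ ∘ₗ LinearMap.mulRight k (antipode k (antipode k c)) =
      P.μ ∘ₗ LinearMap.mulLeft k (antipode k a) := by
    ext x
    simpa [ha] using P.μ_mul_antipode_antipode x c
  have h : g * antipode k (antipode k (antipode k (rightHit α c))) = a * g := by
    rw [← rightHit_antipode_antipode]
    exact (rightHit_comp_mulRight P.Λ_mul_eq_modularFunction_smul _ _).symm.trans
      (congr(rightHit $hμ P.Λ).trans (P.isLeftIntegral.rightHit_comp_mulLeft_antipode _ _))
  have hS := congr((antipode k $h) * g)
  rw [antipode_mul_antidistrib, antipode_mul_antidistrib, ha, mul_assoc,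
    P.antipode_modularElement_mul, mul_one] at hS
  simpa [mul_assoc, pow_succ] using hS

lemma commute_leftHit_modularFunction :
    Commute (LinearMap.mulLeft k (antipode k P.modularElement) *
      LinearMap.mulRight k P.modularElement) (leftHit P.modularFunction.toLinearMap) := by
  set g := P.modularElement
  set α := P.modularFunction
  have hφ {u : H} (hu : IsGroupLikeElem k u) : leftHitAlgHom α u = α u • u :=
    leftHit_isGroupLikeElem hu α.toLinearMap
  have hg : α (antipode k g) * α g = 1 := by
    rw [← map_mul, P.antipode_modularElement_mul, map_one]
  ext x
  have h : leftHitAlgHom α (antipode k g * (x * g)) =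
      antipode k g * (leftHitAlgHom α x * g) := by
    rw [map_mul, map_mul, hφ P.isGroupLikeElem_modularElement,
      hφ P.isGroupLikeElem_modularElement.antipode, mul_smul_comm, smul_mul_assoc, mul_smul_comm,
      smul_smul, hg, one_smul]
  exact h.symm

theorem antipode_pow_four_pow_eq_one {n : ℕ} (hg : P.modularElement ^ n = 1)
    (hα : rightHit P.modularFunction.toLinearMap ^ n = 1) :
    ((antipode k : End k H) ^ 4) ^ n = 1 := by
  have hα' : leftHit P.modularFunction.toLinearMap ^ n = 1 := by
    rw [rightHit_pow, Module.End.one_eq_id, ← rightHit_counit] at hα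
    rw [leftHit_pow, rightHit_injective hα, leftHit_counit, Module.End.one_eq_id]
  have hSg : antipode k P.modularElement ^ n = 1 := by
    have hcomm : Commute (antipode k P.modularElement) P.modularElement :=
      P.antipode_modularElement_mul.trans
        P.isGroupLikeElem_modularElement.mul_antipode_cancel.symm
    rw [← mul_one (_ ^ n), ← hg, ← hcomm.mul_pow, P.antipode_modularElement_mul, one_pow, hg]
  have hcomm : Commute ((antipode k : End k H) ^ 4) (rightHit P.modularFunction.toLinearMap) := by
    simpa only [← pow_mul] using (commute_antipode_sq_rightHit P.modularFunction).pow_left 2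
  have hAd : Commute (LinearMap.mulLeft k (antipode k P.modularElement))
      (LinearMap.mulRight k P.modularElement) := LinearMap.commute_mulLeft_right _ _
  simpa only [hcomm.mul_pow, P.commute_leftHit_modularFunction.mul_pow, hAd.mul_pow, hα, hα',
    LinearMap.pow_mulLeft, LinearMap.pow_mulRight, hg, hSg, mul_one, LinearMap.mulLeft_one,
    LinearMap.mulRight_one, ← Module.End.one_eq_id] using
    congr($(P.antipode_pow_four_mul_rightHit) ^ n)

end IntegralPair

end IntegralPair

lemma isSemisimpleRing_of_sum_mul_eq_one {k A ι : Type*} [Field k] [Ring A] [Algebra k A]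
    {s : Finset ι} {x y : ι → A}
    (hxy : ∀ a, ∑ i ∈ s, (a * x i) ⊗ₜ[k] y i = ∑ i ∈ s, x i ⊗ₜ (y i * a))
    (hone : ∑ i ∈ s, x i * y i = 1) : IsSemisimpleRing A := by
  refine (isSemisimpleModule_iff A A).2 ⟨fun W ↦ ?_⟩
  obtain ⟨π, hπ⟩ : ∃ π : A →ₗ[k] W, π ∘ₗ W.subtype.restrictScalars k = .id :=
    LinearMap.exists_leftInverse_of_injective _ (LinearMap.ker_eq_bot.2 W.injective_subtype)
  let proj : A →ₗ[A] W :=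
    { toFun v := ∑ i ∈ s, x i • π (y i * v)
      map_add' _ _ := by simp [mul_add, Finset.sum_add_distrib]
      map_smul' a v := by
        have h := congr(LinearMap.mul' k A
          ((W.subtype.restrictScalars k ∘ₗ π ∘ₗ LinearMap.mulRight k v).lTensor A $(hxy a)))
        ext
        simpa [Finset.mul_sum, mul_assoc] using h.symm }
  refine ⟨LinearMap.ker proj, LinearMap.isCompl_of_proj fun w ↦ Subtype.ext ?_⟩
  have hW (a : A) : π (a * w) = a • w := congr($hπ (a • w))
  simp [proj, hW, ← mul_smul, ← Finset.sum_smul, hone]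

section Trace

open Coalgebra HopfAlgebra Module

variable {k H : Type*} [Field k] [Ring H] [HopfAlgebra k H] [FiniteDimensional k H]

theorem IsLeftIntegral.isSemisimpleRing {L : H} (hL : IsLeftIntegral k L)
    (h0 : counit (R := k) L ≠ 0) : IsSemisimpleRing H := by
  refine isSemisimpleRing_of_sum_mul_eq_one (k := k) (s := (ℛ k L).index) (x := (ℛ k L).left)
    (y := fun i ↦ (counit (R := k) L)⁻¹ • antipode k ((ℛ k L).right i)) (fun a ↦ ?_) ?_
  · obtain ⟨b, rfl⟩ := antipode_surjective (k := k) a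
    have h := congr((antipode k).lTensor H $(hL.one_tmul_mul_comul b))
    rw [← (ℛ k L).eq] at h
    simpa [Finset.mul_sum, ← Finset.smul_sum, antipode_mul_antidistrib, h0] using h.symm
  · simp [← Finset.smul_sum, sum_mul_antipode_eq_smul, h0]

namespace IntegralPair

variable (P : IntegralPair k H)

lemma trace_antipode_comp (T : End k H) {ι : Type*} (r : Repr k P.Λ ι) :
    LinearMap.trace k H (antipode k ∘ₗ T) =
      ∑ i ∈ r.index, P.μ (T (r.left i) * r.right i) := by
  have h : antipode k ∘ₗ T = ∑ i ∈ r.index,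
      (P.μ ∘ₗ LinearMap.mulRight k (r.right i) ∘ₗ T).smulRight (r.left i) := by
    ext x
    rw [LinearMap.comp_apply, ← P.leftHit_comp_mulLeft, leftHit_eq_sum r]
    simp
  rw [h, map_sum]
  simp

lemma trace_antipode_sq_mul_mulRight (a : H) :
    LinearMap.trace k H (antipode k ^ 2 * LinearMap.mulRight k a) =
      counit P.Λ * P.μ (antipode k a) := by
  rw [pow_two, mul_assoc, Module.End.mul_eq_comp, P.trace_antipode_comp _ (ℛ k P.Λ), ← map_sum]
  simp [antipode_mul_antidistrib, mul_assoc, ← Finset.mul_sum, sum_antipode_mul_eq_smul]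

lemma trace_antipode_sq_mul_rightHit (f : H →ₗ[k] k) :
    LinearMap.trace k H (antipode k ^ 2 * rightHit f) = f P.Λ * P.μ 1 := by
  rw [pow_two, mul_assoc, Module.End.mul_eq_comp, P.trace_antipode_comp _ (ℛ k P.Λ), ← map_sum]
  simp [sum_antipode_rightHit_mul, Algebra.algebraMap_eq_smul_one]

end IntegralPair

variable (hH : ¬ IsSemisimpleRing H)
include hH

lemma counit_eq_zero_of_isLeftIntegral {L : H} (hL : IsLeftIntegral k L) :
    counit (R := k) L = 0 :=
  not_imp_comm.1 hL.isSemisimpleRing hH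

lemma trace_antipode_sq_mul_mulRight_eq_zero (a : H) :
    LinearMap.trace k H (antipode k ^ 2 * LinearMap.mulRight k a) = 0 := by
  obtain ⟨P⟩ : Nonempty (IntegralPair k H) := inferInstance
  rw [P.trace_antipode_sq_mul_mulRight, counit_eq_zero_of_isLeftIntegral hH P.isLeftIntegral,
    zero_mul]

lemma trace_antipode_sq_mul_rightHit_eq_zero (χ : H →ₐ[k] k) :
    LinearMap.trace k H (antipode k ^ 2 * rightHit χ.toLinearMap) = 0 := by
  obtain ⟨P⟩ : Nonempty (IntegralPair k H) := inferInstance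
  have h : χ P.Λ * χ P.Λ = 0 := by
    rw [← map_mul, P.isLeftIntegral, counit_eq_zero_of_isLeftIntegral hH P.isLeftIntegral,
      zero_smul, map_zero]
  rw [P.trace_antipode_sq_mul_rightHit, AlgHom.toLinearMap_apply, mul_self_eq_zero.1 h, zero_mul]

end Trace

section Galois

open Coalgebra HopfAlgebra WithConv Module

section Surjective

variable {k H : Type*} [CommSemiring k] [Semiring H] [HopfAlgebra k H]

/-- The Galois map `x ⊗ y ↦ x y₁ ⊗ y₂` of the right regular coaction. -/
noncomputable def galoisRight (k H : Type*) [CommSemiring k] [Semiring H] [HopfAlgebra k H] :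
    H ⊗[k] H →ₗ[k] H ⊗[k] H :=
  TensorProduct.lift ((LinearMap.mul k (H ⊗[k] H)).compl₁₂
    Algebra.TensorProduct.includeLeft.toLinearMap comul)

lemma galoisRight_tmul (x y : H) : galoisRight k H (x ⊗ₜ y) = (x ⊗ₜ 1) * comul y := rfl

lemma galoisRight_surjective : Function.Surjective (galoisRight k H) := by
  rw [← LinearMap.range_eq_top, eq_top_iff, ← TensorProduct.span_tmul_eq_top, Submodule.span_le]
  rintro _ ⟨x, y, rfl⟩
  refine ⟨∑ i ∈ (ℛ k y).index, (x * antipode k ((ℛ k y).left i)) ⊗ₜ (ℛ k y).right i, ?_⟩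
  have h := congr((x ⊗ₜ[k] (1 : H)) * $(sum_antipode_tmul_one_mul_comul (ℛ k y)))
  simpa [galoisRight_tmul, Finset.mul_sum, ← mul_assoc] using h

end Surjective

lemma trace_mul_trace_eq_of_intertwines {k V : Type*} [Field k] [AddCommGroup V] [Module k V]
    [FiniteDimensional k V] {Ψ : V ⊗[k] V →ₗ[k] V ⊗[k] V} (hΨ : Function.Surjective Ψ)
    {A B A' B' : End k V}
    (h : Ψ ∘ₗ TensorProduct.map A B = TensorProduct.map A' B' ∘ₗ Ψ) :
    LinearMap.trace k V A * LinearMap.trace k V B =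
      LinearMap.trace k V A' * LinearMap.trace k V B' := by
  let e := LinearEquiv.ofBijective Ψ ⟨LinearMap.injective_iff_surjective.2 hΨ, hΨ⟩
  have he : e.conj (TensorProduct.map A B) = TensorProduct.map A' B' := by
    rw [LinearEquiv.conj_apply, LinearEquiv.comp_toLinearMap_symm_eq]
    exact h
  rw [← LinearMap.trace_tensorProduct', ← LinearMap.trace_tensorProduct', ← he,
    LinearMap.trace_conj']

variable {k H : Type*} [Field k] [Ring H] [HopfAlgebra k H]

lemma rightHit_pow_eq_rightHit_algHom (χ : H →ₐ[k] k) (n : ℕ) :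
    rightHit χ.toLinearMap ^ n = rightHit (toConv χ ^ n).ofConv.toLinearMap := by
  rw [rightHit_pow, ← AlgHom.toLinearMap_convPow]

variable [FiniteDimensional k H]

lemma trace_mulRight_sq {u : H} (hu : IsGroupLikeElem k u) :
    LinearMap.trace k H (LinearMap.mulRight k u) ^ 2 =
      finrank k H * LinearMap.trace k H (LinearMap.mulRight k u) := by
  rw [sq, ← LinearMap.trace_one]
  refine (trace_mul_trace_eq_of_intertwines galoisRight_surjective
    (TensorProduct.ext' fun x y ↦ ?_)).symm
  rw [LinearMap.comp_apply, LinearMap.comp_apply, galoisRight_tmul, ← (ℛ k y).eq]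
  simp [galoisRight_tmul, hu.comul_eq_tmul_self, ← (ℛ k y).eq, Finset.sum_mul, Finset.mul_sum,
    mul_assoc]

lemma trace_rightHit_sq (χ : H →ₐ[k] k) :
    LinearMap.trace k H (rightHit χ.toLinearMap) ^ 2 =
      finrank k H * LinearMap.trace k H (rightHit χ.toLinearMap) := by
  rw [sq, ← LinearMap.trace_one, mul_comm (LinearMap.trace k H 1)]
  refine trace_mul_trace_eq_of_intertwines galoisRight_surjective
    (TensorProduct.ext' fun x y ↦ ?_)
  have hcomul := congr($(comul_comp_rightHit χ.toLinearMap) y)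
  rw [LinearMap.comp_apply, LinearMap.comp_apply, ← (ℛ k y).eq] at hcomul
  rw [LinearMap.comp_apply, LinearMap.comp_apply, galoisRight_tmul, ← (ℛ k y).eq]
  have hmul (a b : H) : rightHit χ.toLinearMap (a * b) =
      rightHit χ.toLinearMap a * rightHit χ.toLinearMap b := map_mul (rightHitAlgHom χ) a b
  simp [galoisRight_tmul, hcomul, Finset.mul_sum, hmul]

lemma isOfFinOrder_of_isUnit {M : Type*} [Monoid M] {a : M} (ha : IsUnit a) {t : Set M}
    (ht : t.Finite) (hmem : ∀ n : ℕ, a ^ n ∈ t) : IsOfFinOrder a := by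
  obtain ⟨m, n, hmn, h⟩ := ht.exists_lt_map_eq_of_forall_mem hmem
  refine isOfFinOrder_iff_pow_eq_one.2 ⟨n - m, tsub_pos_of_lt hmn, (ha.pow m).mul_left_cancel ?_⟩
  rw [← pow_add, add_tsub_cancel_of_le hmn.le, ← h, mul_one]

lemma orderOf_mulRight {R A : Type*} [CommSemiring R] [Semiring A] [Algebra R A] (a : A) :
    orderOf (LinearMap.mulRight R a : End R A) = orderOf a := by
  refine orderOf_eq_orderOf_iff.2 fun n ↦ ?_
  rw [LinearMap.pow_mulRight]
  exact ⟨fun h ↦ by simpa using congr($h 1), fun h ↦ by rw [h, LinearMap.mulRight_one]; rfl⟩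

lemma isOfFinOrder_of_isGroupLikeElem {u : H} (hu : IsGroupLikeElem k u) : IsOfFinOrder u := by
  have hfin : Finite (GroupLike k H) := (linearIndep_groupLikeVal (R := k) (A := H)).finite
  exact isOfFinOrder_of_isUnit hu.isUnit (Set.finite_range (GroupLike.val (R := k)))
    fun n ↦ ⟨⟨u ^ n, hu.pow⟩, rfl⟩

lemma isOfFinOrder_mulRight {u : H} (hu : IsGroupLikeElem k u) :
    IsOfFinOrder (LinearMap.mulRight k u : End k H) := by
  rw [← orderOf_pos_iff, orderOf_mulRight, orderOf_pos_iff]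
  exact isOfFinOrder_of_isGroupLikeElem hu

lemma isOfFinOrder_rightHit (χ : H →ₐ[k] k) :
    IsOfFinOrder (rightHit χ.toLinearMap) := by
  have hfin : Finite (H →ₐ[k] k) := (linearIndependent_algHom_toLinearMap k H k).finite
  have hinj : Function.Injective (rightHit χ.toLinearMap) := by
    have h := antipode_injective (k := k) (H := H)
    rw [← leftHit_comp_antipode_comp_rightHit χ, ← LinearMap.comp_assoc, LinearMap.coe_comp] at h
    exact h.of_comp
  have hunit := (LinearMap.isUnit_iff_ker_eq_bot _).2 (LinearMap.ker_eq_bot.2 hinj)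
  refine isOfFinOrder_of_isUnit hunit
    (Set.finite_range fun χ' : H →ₐ[k] k ↦ rightHit χ'.toLinearMap)
    fun n ↦ ⟨_, (rightHit_pow_eq_rightHit_algHom χ n).symm⟩

end Galois

section Counting

open HopfAlgebra Module

variable {k H : Type*} [Field k] [Ring H] [HopfAlgebra k H]

lemma commute_mulRight_antipode_sq {u : H} (hu : IsGroupLikeElem k u) :
    Commute (LinearMap.mulRight k u) ((antipode k : End k H) ^ 2) := by
  ext x
  simp [sq, antipode_mul_antidistrib, hu.antipode_antipode]

lemma linearIndependent_pow_of_isGroupLikeElem {u : H} (hu : IsGroupLikeElem k u) :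
    LinearIndependent k fun i : Fin (orderOf u) ↦ u ^ (i : ℕ) :=
  (linearIndep_groupLikeVal (R := k) (A := H)).comp
    (fun i : Fin (orderOf u) ↦ (⟨u ^ (i : ℕ), hu.pow⟩ : GroupLike k H)) fun i j hij ↦
      Fin.ext (pow_injOn_Iio_orderOf i.2 j.2 congr(GroupLike.val $hij))

section Trace

variable [FiniteDimensional k H] (hH : ¬ IsSemisimpleRing H)
include hH

lemma trace_antipode_sq_mul_mulRight_pow_eq_zero (a : H) (i : ℕ) :
    LinearMap.trace k H (antipode k ^ 2 * LinearMap.mulRight k a ^ i) = 0 := by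
  rw [LinearMap.pow_mulRight, trace_antipode_sq_mul_mulRight_eq_zero hH]

lemma trace_antipode_sq_mul_rightHit_pow_eq_zero (χ : H →ₐ[k] k) (i : ℕ) :
    LinearMap.trace k H (antipode k ^ 2 * rightHit χ.toLinearMap ^ i) = 0 := by
  rw [rightHit_pow_eq_rightHit_algHom, trace_antipode_sq_mul_rightHit_eq_zero hH]

end Trace

lemma antipode_sq_pow_two_mul_eq_one {n : ℕ} (h : ((antipode k : End k H) ^ 4) ^ n = 1) :
    ((antipode k : End k H) ^ 2) ^ (2 * n) = 1 := by
  rw [pow_mul, ← pow_mul (antipode k : End k H), h]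

lemma algHom_apply_eq_one_of_coprime {u : H} (hu : IsGroupLikeElem k u) {χ : H →ₐ[k] k}
    (hcop : (orderOf u).Coprime (orderOf (rightHit χ.toLinearMap))) : χ u = 1 := by
  let T : End k H := rightHit χ.toLinearMap
  have hu_order : χ u ^ orderOf u = 1 := by rw [← map_pow, pow_orderOf_eq_one, map_one]
  have hT_order : χ u ^ orderOf T = 1 := by
    have hvec : T.HasEigenvector (χ u) u :=
      ⟨End.mem_eigenspace_iff.2 (rightHit_isGroupLikeElem hu _), hu.ne_zero⟩
    have h := hvec.pow_apply (orderOf T)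
    rw [pow_orderOf_eq_one, End.one_apply] at h
    exact smul_left_injective k hu.ne_zero (h.symm.trans (one_smul k u).symm)
  exact orderOf_eq_one_iff.1 (Nat.eq_one_of_dvd_coprimes hcop
    (orderOf_dvd_of_pow_eq_one hu_order) (orderOf_dvd_of_pow_eq_one hT_order))

variable [FiniteDimensional k H]

lemma span_pow_eq_eigenspace_rightHit {u : H} (hu : IsGroupLikeElem k u) {χ : H →ₐ[k] k}
    (hχ : χ u = 1) (hrank : finrank k (End.eigenspace (rightHit χ.toLinearMap) 1) = orderOf u) :
    Submodule.span k (Set.range fun i : Fin (orderOf u) ↦ u ^ (i : ℕ)) =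
      End.eigenspace (rightHit χ.toLinearMap) 1 := by
  refine Submodule.eq_of_le_of_finrank_eq (Submodule.span_le.2 ?_) ?_
  · rintro _ ⟨i, rfl⟩
    simpa [hχ] using rightHit_isGroupLikeElem hu.pow χ.toLinearMap
  · rw [finrank_span_eq_card (linearIndependent_pow_of_isGroupLikeElem hu), Fintype.card_fin, hrank]

variable [CharZero k]

lemma finrank_eigenspace_mulRight_mul_orderOf {u : H} (hu : IsGroupLikeElem k u) :
    finrank k (End.eigenspace (LinearMap.mulRight k u) 1) * orderOf u = finrank k H := by
  rw [← orderOf_mulRight (R := k),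
    finrank_eigenspace_one_mul_orderOf (isOfFinOrder_mulRight hu) fun i ↦ ?_]
  rw [LinearMap.pow_mulRight]
  exact trace_mulRight_sq hu.pow

lemma finrank_eigenspace_rightHit_mul_orderOf (χ : H →ₐ[k] k) :
    finrank k (End.eigenspace (rightHit χ.toLinearMap) 1) * orderOf (rightHit χ.toLinearMap) =
      finrank k H := by
  refine finrank_eigenspace_one_mul_orderOf (isOfFinOrder_rightHit χ) fun i ↦ ?_
  rw [rightHit_pow_eq_rightHit_algHom]
  exact trace_rightHit_sq _

variable (hH : ¬ IsSemisimpleRing H)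
include hH

theorem antipode_pow_four_ne_one (hodd : Odd (finrank k H)) :
    (antipode k : End k H) ^ 4 ≠ 1 := by
  intro h
  obtain ⟨r, hr, hr_prime⟩ := Nat.exists_infinite_primes (finrank k H + 3)
  have hpow := antipode_sq_pow_two_mul_eq_one (n := r) (by rw [h, one_pow])
  have htr : LinearMap.trace k H (antipode k ^ 2) = 0 := by
    simpa only [pow_zero, mul_one] using trace_antipode_sq_mul_mulRight_pow_eq_zero hH 1 0
  have := prime_le_finrank_of_trace_eq_zero hr_prime (hr_prime.odd_of_ne_two (by lia)) hpow htr hodd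
  lia

lemma orderOf_mul_orderOf_rightHit_ne {u : H} (hu : IsGroupLikeElem k u) (χ : H →ₐ[k] k)
    (hcop : (orderOf u).Coprime (orderOf (rightHit χ.toLinearMap))) :
    orderOf u * orderOf (rightHit χ.toLinearMap) ≠ finrank k H := by
  intro hmul
  have hT := isOfFinOrder_rightHit χ
  have hrank : finrank k (End.eigenspace (rightHit χ.toLinearMap) 1) = orderOf u :=
    Nat.eq_of_mul_eq_mul_right hT.orderOf_pos
      ((finrank_eigenspace_rightHit_mul_orderOf χ).trans hmul.symm)
  have hmap := End.mapsTo_genEigenspace_of_comm (commute_antipode_sq_rightHit χ).symm 1 1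
  have hid : ((antipode k : End k H) ^ 2).restrict hmap = 1 := by
    have hle : End.eigenspace (rightHit χ.toLinearMap) 1 ≤
        LinearMap.eqLocus ((antipode k : End k H) ^ 2) 1 := by
      rw [← span_pow_eq_eigenspace_rightHit hu (algHom_apply_eq_one_of_coprime hu hcop) hrank,
        Submodule.span_le]
      rintro _ ⟨i, rfl⟩
      exact hu.pow.antipode_antipode
    exact LinearMap.ext fun x ↦ Subtype.ext (hle x.2)
  have htr := trace_restrict_eigenspace_one_eq_zero hT hmap
    (trace_antipode_sq_mul_rightHit_pow_eq_zero hH χ)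
  rw [hid, LinearMap.trace_one, hrank, Nat.cast_eq_zero] at htr
  exact (isOfFinOrder_of_isGroupLikeElem hu).orderOf_pos.ne' htr

theorem antipode_pow_four_pow_prime_eq_one {p q : ℕ} (hp : p.Prime) (hq : q.Prime)
    (hpodd : Odd p) (hqodd : Odd q) (hpq : p ≤ q) (hdim : finrank k H = p * q) :
    ((antipode k : End k H) ^ 4) ^ p = 1 := by
  have : Nontrivial H := nontrivial_of_finrank_pos (R := k) (hdim ▸ Nat.mul_pos hp.pos hq.pos)
  obtain ⟨P⟩ : Nonempty (IntegralPair k H) := inferInstance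
  set g := P.modularElement
  set χ := P.modularFunction
  have hg : IsGroupLikeElem k g := P.isGroupLikeElem_modularElement
  have hg_fin := isOfFinOrder_mulRight hg
  have hχ_fin := isOfFinOrder_rightHit χ
  have hg_comm := commute_mulRight_antipode_sq hg
  have hχ_comm := (commute_antipode_sq_rightHit χ).symm
  have hg_tr := trace_antipode_sq_mul_mulRight_pow_eq_zero (k := k) hH g
  have hχ_tr := trace_antipode_sq_mul_rightHit_pow_eq_zero hH χ
  have hg_dim := hdim ▸ finrank_eigenspace_mulRight_mul_orderOf hg
  have hχ_dim := hdim ▸ finrank_eigenspace_rightHit_mul_orderOf χ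
  have hcop := hdim ▸ orderOf_mul_orderOf_rightHit_ne hH hg χ
  have hpow {n : ℕ} (hgn : orderOf g ∣ n) (hχn : orderOf (rightHit χ.toLinearMap) ∣ n) :
      ((antipode k : End k H) ^ 4) ^ n = 1 :=
    P.antipode_pow_four_pow_eq_one (orderOf_dvd_iff_pow_eq_one.1 hgn)
      (orderOf_dvd_iff_pow_eq_one.1 hχn)
  have hodd := hpodd.mul hqodd
  have hpq_pow := antipode_sq_pow_two_mul_eq_one
    (hpow (Dvd.intro_left _ hg_dim) (Dvd.intro_left _ hχ_dim))
  have hne : 2 * (p * q) ≠ 0 := by simp [hp.ne_zero, hq.ne_zero]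
  have hg_ne := finrank_eigenspace_one_ne_one hg_fin hg_comm hg_tr hne hpq_pow
  have hχ_ne := finrank_eigenspace_one_ne_one hχ_fin hχ_comm hχ_tr hne hpq_pow
  refine hpow (dvd_of_mul_eq_prime_mul_prime hp hq hpq hg_dim hχ_dim hg_ne hχ_ne
      (fun hgq hχq ↦ ?_) hcop)
    (dvd_of_mul_eq_prime_mul_prime hp hq hpq hχ_dim hg_dim hχ_ne hg_ne
      (fun hχq hgq ↦ ?_) fun h ↦ mul_comm (orderOf g) _ ▸ hcop h.symm)
  · exact prime_le_finrank_eigenspace_one hg_fin hg_comm hg_tr hq hqodd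
      (antipode_sq_pow_two_mul_eq_one (hpow hgq hχq)) (Nat.odd_mul.1 (hg_dim ▸ hodd)).1
  · exact prime_le_finrank_eigenspace_one hχ_fin hχ_comm hχ_tr hq hqodd
      (antipode_sq_pow_two_mul_eq_one (hpow hgq hχq)) (Nat.odd_mul.1 (hχ_dim ▸ hodd)).1

end Counting

theorem stmt1_general (k : Type*) [Field k] [CharZero k]
    (p q : ℕ) (hp : p.Prime) (hq : q.Prime) (hpodd : Odd p) (hqodd : Odd q) (hpq : p ≤ q)
    (H : Type*) [Ring H] [HopfAlgebra k H] [FiniteDimensional k H]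
    (hdim : Module.finrank k H = p * q) (hss : ¬ IsSemisimpleRing H) :
    orderOf ((HopfAlgebra.antipode (R := k) (A := H) : Module.End k H) ^ 4) = p :=
  have : Fact p.Prime := ⟨hp⟩
  orderOf_eq_prime (antipode_pow_four_pow_prime_eq_one hss hp hq hpodd hqodd hpq hdim)
    (antipode_pow_four_ne_one hss (hdim ▸ hpodd.mul hqodd))

/-- Proposition 5.2(i). If `H` is a non-semisimple Hopf algebra of dimension
`p q`, where `p ≤ q` are odd primes, over an algebraically closed field of characteristic `0`,
then the order of `S⁴` is `p`. -/
theorem stmt1 (k : Type*) [Field k] [IsAlgClosed k] [CharZero k]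
    (p q : ℕ) (hp : p.Prime) (hq : q.Prime) (hpodd : Odd p) (hqodd : Odd q) (hpq : p ≤ q)
    (H : Type*) [Ring H] [HopfAlgebra k H] [FiniteDimensional k H]
    (hdim : Module.finrank k H = p * q) (hss : ¬ IsSemisimpleRing H) :
    orderOf ((HopfAlgebra.antipode (R := k) (A := H) : Module.End k H) ^ 4) = p :=
  stmt1_general k p q hp hq hpodd hqodd hpq H hdim hss
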